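/- Let P ⊆ ℝ^d be a d-dimensional simplicial reflexive polytope, F a facet of P and v ∈ H_P(F,0) a vertex of P with ⟨u_F, v⟩ = 0. Then: (1) for every w ∈ 𝒱(F), v equals the neighboring vertex n(F,w) if and only if ⟨u_F^w, v⟩ < 0; in particular, for every w ∈ 𝒱(F) there is at most one vertex v' ∈ H_P(F,0) with ⟨u_F^w, v'⟩ < 0; (2) if v is contained in precisely one neighboring facet N(F,w) of F, then v ≁ w and v + w is a lattice point of F. -/

import Mathlib

noncomputable section

/-- The standard inner product on `ℝ^d`. -/
def dotp {d : ℕ} (x y : Fin d → ℝ) : ℝ := ∑ i, x i * y i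

/-- `x` is a point of the lattice `ℤ^d`. -/
def IsLP {d : ℕ} (x : Fin d → ℝ) : Prop := ∀ i, ∃ n : ℤ, x i = (n : ℝ)

/-- A lattice polytope: convex hull of finitely many lattice points. -/
def IsLatticePolytope {d : ℕ} (P : Set (Fin d → ℝ)) : Prop :=
  ∃ V : Finset (Fin d → ℝ), (∀ v ∈ V, IsLP v) ∧ P = convexHull ℝ (V : Set (Fin d → ℝ))

/-- The dual polytope `P* = {x | ⟨x,y⟩ ≤ 1 ∀ y ∈ P}`. -/
def dualPolytope {d : ℕ} (P : Set (Fin d → ℝ)) : Set (Fin d → ℝ) :=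
  {x | ∀ y ∈ P, dotp x y ≤ 1}

/-- `P` is a reflexive polytope: a (`d`-dimensional) lattice polytope with `0` in its
interior whose dual is again a lattice polytope. -/
def IsReflexive {d : ℕ} (P : Set (Fin d → ℝ)) : Prop :=
  IsLatticePolytope P ∧ (0 : Fin d → ℝ) ∈ interior P ∧ IsLatticePolytope (dualPolytope P)

/-- `F` is a facet of `P` with (uniquely determined) outer normal `u`, normalized by
`⟨u, F⟩ = 1` (possible since `0` is in the interior of `P`). -/
def IsFacetNormal {d : ℕ} (P F : Set (Fin d → ℝ)) (u : Fin d → ℝ) : Prop :=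
  F.Nonempty ∧ (∀ y ∈ P, dotp u y ≤ 1) ∧ F = {y ∈ P | dotp u y = 1} ∧
    Module.finrank ℝ (vectorSpan ℝ F) = d - 1

/-- `F` is a facet of `P`. -/
def IsFacet {d : ℕ} (P F : Set (Fin d → ℝ)) : Prop := ∃ u, IsFacetNormal P F u

/-- `P` is simplicial: every facet has exactly `d` vertices. -/
def IsSimplicial {d : ℕ} (P : Set (Fin d → ℝ)) : Prop :=
  ∀ F, IsFacet P F → (Set.extremePoints ℝ F).ncard = d

/-- `F'` is the neighboring facet `N(F,w)`: a facet different from `F` containing all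
vertices of `F` except `w`. -/
def NbrFacet {d : ℕ} (P F : Set (Fin d → ℝ)) (w : Fin d → ℝ) (F' : Set (Fin d → ℝ)) : Prop :=
  IsFacet P F' ∧ F' ≠ F ∧ Set.extremePoints ℝ F \ {w} ⊆ F'

/-- `v'` is the neighboring vertex `n(F,w)`: the vertex of the neighboring facet `N(F,w)`
not contained in `F`. -/
def NbrVertex {d : ℕ} (P F : Set (Fin d → ℝ)) (w v' : Fin d → ℝ) : Prop :=
  ∃ F', NbrFacet P F w F' ∧ v' ∈ Set.extremePoints ℝ F' ∧ v' ∉ F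


/-- linear functional attached to a vector -/
def dotL {d : ℕ} (x : Fin d → ℝ) : (Fin d → ℝ) →ₗ[ℝ] ℝ where
  toFun y := dotp x y
  map_add' y z := by simp [dotp, mul_add, Finset.sum_add_distrib]
  map_smul' c y := by
    simp only [dotp, Pi.smul_apply, smul_eq_mul, RingHom.id_apply, Finset.mul_sum]
    exact Finset.sum_congr rfl fun i _ => by ring

theorem dotL_apply {d : ℕ} (x y : Fin d → ℝ) : dotL x y = dotp x y := rfl

theorem dotp_comm' {d : ℕ} (x y : Fin d → ℝ) : dotp x y = dotp y x :=
  Finset.sum_congr rfl fun i _ => by ring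

theorem dotp_add_right {d : ℕ} (x y z : Fin d → ℝ) : dotp x (y + z) = dotp x y + dotp x z :=
  (dotL x).map_add y z

theorem dotp_smul_right {d : ℕ} (x y : Fin d → ℝ) (c : ℝ) : dotp x (c • y) = c * dotp x y :=
  (dotL x).map_smul c y

theorem dotp_add_left {d : ℕ} (x y z : Fin d → ℝ) : dotp (x + y) z = dotp x z + dotp y z := by
  rw [dotp_comm', dotp_add_right, dotp_comm' z x, dotp_comm' z y]

theorem dotp_smul_left {d : ℕ} (x y : Fin d → ℝ) (c : ℝ) : dotp (c • x) y = c * dotp x y := by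
  rw [dotp_comm', dotp_smul_right, dotp_comm']

theorem dotp_sum_left {d : ℕ} {ι : Type*} (s : Finset ι) (f : ι → Fin d → ℝ) (y : Fin d → ℝ) :
    dotp (∑ i ∈ s, f i) y = ∑ i ∈ s, dotp (f i) y := by
  rw [dotp_comm', ← dotL_apply, map_sum]
  exact Finset.sum_congr rfl fun i _ => dotp_comm' _ _

theorem dotp_self_zero {d : ℕ} (x : Fin d → ℝ) (h : dotp x x = 0) : x = 0 := by
  funext i
  have := (Finset.sum_eq_zero_iff_of_nonneg (fun i _ => mul_self_nonneg (x i))).1 h i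
    (Finset.mem_univ i)
  simpa using this

theorem dotp_cont {d : ℕ} (x : Fin d → ℝ) : Continuous (fun y => dotp x y) := by
  unfold dotp; fun_prop

theorem eq_of_span {d : ℕ} (S : Set (Fin d → ℝ)) (hS : Submodule.span ℝ S = ⊤)
    (x y : Fin d → ℝ) (h : ∀ s ∈ S, dotp x s = dotp y s) : x = y := by
  have h1 : dotL x = dotL y := LinearMap.ext_on hS (fun s hs => h s hs)
  have h2 : dotp (x + (-1 : ℝ) • y) (x + (-1 : ℝ) • y) = 0 := by
    have := LinearMap.congr_fun h1 (x + (-1 : ℝ) • y)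
    rw [dotL_apply, dotL_apply] at this
    rw [dotp_add_left, dotp_smul_left, this]; ring
  have h3 := dotp_self_zero _ h2
  have : x - y = 0 := by rw [← h3]; simp [sub_eq_add_neg]
  exact sub_eq_zero.1 this

theorem exists_perp {d : ℕ} (S : Set (Fin d → ℝ)) (hS : Submodule.span ℝ S ≠ ⊤) :
    ∃ z : Fin d → ℝ, z ≠ 0 ∧ ∀ s ∈ S, dotp z s = 0 := by
  obtain ⟨f, hf0, hf⟩ := Submodule.exists_le_ker_of_lt_top _ (lt_top_iff_ne_top.2 hS)
  have key : ∀ y, dotp (fun i => f (Pi.single i 1)) y = f y := by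
    intro y
    conv_rhs => rw [LinearMap.pi_apply_eq_sum_univ f y]
    unfold dotp
    refine Finset.sum_congr rfl fun i _ => ?_
    rw [smul_eq_mul, mul_comm]
    congr 1
    show f _ = f _
    congr 1
    funext j
    simp [Pi.single_apply, eq_comm]
  refine ⟨fun i => f (Pi.single i 1), ?_, ?_⟩
  · intro h0
    apply hf0
    refine LinearMap.ext fun y => ?_
    rw [← key, h0]
    simp [dotp]
  · intro s hs
    rw [key]
    exact hf (Submodule.subset_span hs)

theorem span_of_finrank {d : ℕ} (F : Set (Fin d → ℝ)) (u : Fin d → ℝ) (hne : F.Nonempty)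
    (hu : ∀ y ∈ F, dotp u y = 1) (hr : Module.finrank ℝ (vectorSpan ℝ F) = d - 1) :
    Submodule.span ℝ F = ⊤ := by
  obtain ⟨p, hp⟩ := hne
  have hle : vectorSpan ℝ F ≤ Submodule.span ℝ F := by
    rw [vectorSpan_def, Submodule.span_le]
    rintro _ ⟨a, ha, b, hb, rfl⟩
    exact Submodule.sub_mem _ (Submodule.subset_span ha) (Submodule.subset_span hb)
  have hker : vectorSpan ℝ F ≤ LinearMap.ker (dotL u) := by
    rw [vectorSpan_def, Submodule.span_le]
    rintro _ ⟨a, ha, b, hb, rfl⟩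
    show dotL u (a - b) = 0
    rw [map_sub, dotL_apply, dotL_apply, hu a ha, hu b hb, sub_self]
  have hlt : vectorSpan ℝ F < Submodule.span ℝ F := by
    refine lt_of_le_of_ne hle fun h => ?_
    have : p ∈ vectorSpan ℝ F := by rw [h]; exact Submodule.subset_span hp
    have h0 : dotp u p = 0 := hker this
    rw [hu p hp] at h0
    exact one_ne_zero h0
  have h1 := Submodule.finrank_lt_finrank_of_lt hlt
  have h2 := Submodule.finrank_le (Submodule.span ℝ F)
  have h3 : Module.finrank ℝ (Fin d → ℝ) = d := by simp
  apply Submodule.eq_top_of_finrank_eq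
  omega

theorem finrank_of_span {d : ℕ} (F : Set (Fin d → ℝ)) (u : Fin d → ℝ) (hne : F.Nonempty)
    (hu : ∀ y ∈ F, dotp u y = 1) (hs : Submodule.span ℝ F = ⊤) :
    Module.finrank ℝ (vectorSpan ℝ F) = d - 1 := by
  obtain ⟨p, hp⟩ := hne
  have h3 : Module.finrank ℝ (Fin d → ℝ) = d := by simp
  have hker : vectorSpan ℝ F ≤ LinearMap.ker (dotL u) := by
    rw [vectorSpan_def, Submodule.span_le]
    rintro _ ⟨a, ha, b, hb, rfl⟩
    show dotL u (a - b) = 0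
    rw [map_sub, dotL_apply, dotL_apply, hu a ha, hu b hb, sub_self]
  have hlt : vectorSpan ℝ F < ⊤ := by
    refine lt_of_le_of_ne le_top fun h => ?_
    have : p ∈ vectorSpan ℝ F := by rw [h]; trivial
    have h0 : dotp u p = 0 := hker this
    rw [hu p hp] at h0
    exact one_ne_zero h0
  have h1 := Submodule.finrank_lt_finrank_of_lt hlt
  rw [finrank_top, h3] at h1
  have hsup : Submodule.span ℝ {p} ⊔ vectorSpan ℝ F = ⊤ := by
    rw [eq_top_iff, ← hs, Submodule.span_le]
    intro x hx
    have : x = p + (x - p) := by abel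
    rw [this]
    exact Submodule.add_mem _
      (Submodule.mem_sup_left (Submodule.mem_span_singleton_self p))
      (Submodule.mem_sup_right (vsub_mem_vectorSpan ℝ hx hp))
  have h4 := Submodule.finrank_add_le_finrank_add_finrank (Submodule.span ℝ {p}) (vectorSpan ℝ F)
  rw [hsup, finrank_top, h3] at h4
  have h5 : Module.finrank ℝ (Submodule.span ℝ ({p} : Set (Fin d → ℝ))) ≤ 1 := by
    have := finrank_span_le_card (R := ℝ) ({p} : Set (Fin d → ℝ))
    simpa using this
  omega

theorem facetNormal_of_span {d : ℕ} (P : Set (Fin d → ℝ)) (u : Fin d → ℝ)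
    (hne : {y ∈ P | dotp u y = 1}.Nonempty) (hu : ∀ y ∈ P, dotp u y ≤ 1)
    (hs : Submodule.span ℝ {y ∈ P | dotp u y = 1} = ⊤) :
    IsFacetNormal P {y ∈ P | dotp u y = 1} u :=
  ⟨hne, hu, rfl, finrank_of_span _ u hne (fun _ hy => hy.2) hs⟩

theorem IsFacetNormal.span_top {d : ℕ} {P F : Set (Fin d → ℝ)} {u : Fin d → ℝ}
    (h : IsFacetNormal P F u) : Submodule.span ℝ F = ⊤ :=
  span_of_finrank F u h.1 (fun y hy => by rw [h.2.2.1] at hy; exact hy.2) h.2.2.2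

theorem lp_of_extreme {d : ℕ} {Q : Set (Fin d → ℝ)} (hQ : IsLatticePolytope Q) {x : Fin d → ℝ}
    (hx : x ∈ Set.extremePoints ℝ Q) : IsLP x := by
  obtain ⟨V, hV, rfl⟩ := hQ
  exact hV x (extremePoints_convexHull_subset hx)

theorem isCompact_lp {d : ℕ} {Q : Set (Fin d → ℝ)} (hQ : IsLatticePolytope Q) :
    IsCompact Q := by
  obtain ⟨V, hV, rfl⟩ := hQ
  exact V.finite_toSet.isCompact_convexHull ℝ

theorem convex_lp {d : ℕ} {Q : Set (Fin d → ℝ)} (hQ : IsLatticePolytope Q) :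
    Convex ℝ Q := by
  obtain ⟨V, hV, rfl⟩ := hQ
  exact convex_convexHull ℝ _

theorem dotp_int {d : ℕ} {x y : Fin d → ℝ} (hx : IsLP x) (hy : IsLP y) :
    ∃ n : ℤ, dotp x y = n := by
  choose a ha using hx
  choose b hb using hy
  refine ⟨∑ i, a i * b i, ?_⟩
  unfold dotp
  push_cast
  exact Finset.sum_congr rfl fun i _ => by rw [ha, hb]

theorem IsFacetNormal.extreme_dual {d : ℕ} {P F : Set (Fin d → ℝ)} {u : Fin d → ℝ}
    (h : IsFacetNormal P F u) : u ∈ Set.extremePoints ℝ (dualPolytope P) := by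
  rw [mem_extremePoints]
  refine ⟨h.2.1, ?_⟩
  rintro y hy z hz ⟨a, b, ha, hb, hab, rfl⟩
  have key : ∀ x ∈ F, dotp y x = 1 ∧ dotp z x = 1 := by
    intro x hx
    rw [h.2.2.1] at hx
    obtain ⟨hxP, hx1⟩ := hx
    rw [dotp_add_left, dotp_smul_left, dotp_smul_left] at hx1
    have h1 := hy x hxP
    have h2 := hz x hxP
    constructor <;> nlinarith
  have one : ∀ x ∈ F, dotp (a • y + b • z) x = 1 := by
    intro x hx
    rw [h.2.2.1] at hx
    exact hx.2
  exact ⟨eq_of_span F h.span_top _ _ fun s hs => by rw [(key s hs).1, one s hs],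
    eq_of_span F h.span_top _ _ fun s hs => by rw [(key s hs).2, one s hs]⟩

theorem IsFacetNormal.lp {d : ℕ} {P F : Set (Fin d → ℝ)} {u : Fin d → ℝ}
    (h : IsFacetNormal P F u) (hP : IsReflexive P) : IsLP u :=
  lp_of_extreme hP.2.2 h.extreme_dual

theorem le_of_conv {d : ℕ} (V : Set (Fin d → ℝ)) (u : Fin d → ℝ) (c : ℝ)
    (h : ∀ x ∈ V, dotp u x ≤ c) : ∀ x ∈ convexHull ℝ V, dotp u x ≤ c := by
  have hc : Convex ℝ {x | dotp u x ≤ c} := convex_halfSpace_le (dotL u).isLinear c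
  exact fun x hx => convexHull_min h hc hx

theorem IsFacetNormal.sub_conv {d : ℕ} {P F : Set (Fin d → ℝ)} {u : Fin d → ℝ}
    (h : IsFacetNormal P F u) (hP : IsReflexive P) (hfin : (Set.extremePoints ℝ F).Finite) :
    F ⊆ convexHull ℝ (Set.extremePoints ℝ F) := by
  have hFc : IsCompact F := by
    rw [h.2.2.1]
    exact (isCompact_lp hP.1).inter_right (isClosed_eq (dotp_cont u) continuous_const)
  have hFx : Convex ℝ F := by
    rw [h.2.2.1]
    exact (convex_lp hP.1).inter (convex_hyperplane (dotL u).isLinear 1)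
  have := closure_convexHull_extremePoints hFc hFx
  rw [(hfin.isClosed_convexHull ℝ).closure_eq] at this
  exact this.ge

theorem IsFacetNormal.ext_sub {d : ℕ} {P F : Set (Fin d → ℝ)} {u : Fin d → ℝ}
    (h : IsFacetNormal P F u) : Set.extremePoints ℝ F ⊆ Set.extremePoints ℝ P := by
  intro x hx
  rw [mem_extremePoints] at hx ⊢
  obtain ⟨hxF, hx⟩ := hx
  have hxF' := hxF
  rw [h.2.2.1] at hxF'
  refine ⟨hxF'.1, ?_⟩
  intro y hy z hz hseg
  have hseg' := hseg
  obtain ⟨a, b, ha, hb, hab, hxe⟩ := hseg'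
  have h1 := hxF'.2
  rw [← hxe, dotp_add_right, dotp_smul_right, dotp_smul_right] at h1
  have h2 := h.2.1 y hy
  have h3 := h.2.1 z hz
  refine hx y ?_ z ?_ hseg
  · rw [h.2.2.1]; exact ⟨hy, by nlinarith⟩
  · rw [h.2.2.1]; exact ⟨hz, by nlinarith⟩

theorem facet_of_extreme {d : ℕ} (hd : 0 < d) {P : Set (Fin d → ℝ)} (hP : IsLatticePolytope P)
    {y : Fin d → ℝ} (hy : y ∈ Set.extremePoints ℝ (dualPolytope P)) :
    IsFacetNormal P {x ∈ P | dotp y x = 1} y := by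
  have hyP : ∀ x ∈ P, dotp y x ≤ 1 := hy.1
  have hs : Submodule.span ℝ {x ∈ P | dotp y x = 1} = ⊤ := by
    by_contra hne
    obtain ⟨z, hz0, hz⟩ := exists_perp _ hne
    obtain ⟨V, -, hPV⟩ := hP
    have hVP : ∀ x ∈ V, x ∈ P := fun x hx => by rw [hPV]; exact subset_convexHull ℝ _ hx
    -- a uniform small step
    have hε : ∃ ε : ℝ, 0 < ε ∧ ∀ x ∈ V, dotp y x + ε * |dotp z x| ≤ 1 := by
      have hx : ∀ x ∈ V, ∀ᶠ ε in nhdsWithin (0 : ℝ) (Set.Ioi 0),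
          dotp y x + ε * |dotp z x| ≤ 1 := by
        intro x hx
        rcases (hyP x (hVP x hx)).lt_or_eq with hlt | heq
        · have hc : Continuous fun ε : ℝ => dotp y x + ε * |dotp z x| := by fun_prop
          have ht := hc.tendsto 0
          simp only [zero_mul, add_zero] at ht
          exact ((ht.eventually (gt_mem_nhds hlt)).filter_mono nhdsWithin_le_nhds).mono
            fun ε h => h.le
        · refine Filter.Eventually.of_forall fun ε => ?_
          rw [hz x ⟨hVP x hx, heq⟩, heq]; simp
      have hall := (Filter.eventually_all_finset V).2 hx
      obtain ⟨ε, h1, h2⟩ := (hall.and self_mem_nhdsWithin).exists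
      exact ⟨ε, h2, h1⟩
    obtain ⟨ε, hε0, hε⟩ := hε
    have hmem : ∀ s : ℝ, |s| ≤ ε → y + s • z ∈ dualPolytope P := by
      intro s hs x hx
      rw [hPV] at hx
      refine le_of_conv _ _ 1 ?_ x hx
      intro x hx
      rw [dotp_add_left, dotp_smul_left]
      have h1 : s * dotp z x ≤ |s| * |dotp z x| := by rw [← abs_mul]; exact le_abs_self _
      have h2 : |s| * |dotp z x| ≤ ε * |dotp z x| :=
        mul_le_mul_of_nonneg_right hs (abs_nonneg _)
      have := hε x hx
      linarith
    have h1 := hmem ε (abs_of_pos hε0).le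
    have h2 := hmem (-ε) (by rw [abs_neg, abs_of_pos hε0])
    have h3 := (mem_extremePoints.1 hy).2 _ h1 _ h2
      ⟨1/2, 1/2, by norm_num, by norm_num, by norm_num, by
        funext i; simp; ring⟩
    have h4 : ε • z = 0 := by simpa using h3.1
    rcases smul_eq_zero.1 h4 with h | h
    · exact hε0.ne' h
    · exact hz0 h
  refine facetNormal_of_span P y ?_ hyP hs
  by_contra hempty
  rw [Set.not_nonempty_iff_eq_empty] at hempty
  rw [hempty, Submodule.span_empty] at hs
  have := congrArg (fun S : Submodule ℝ (Fin d → ℝ) => Module.finrank ℝ S) hs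
  simp at this
  omega

theorem mem_of_facets {d : ℕ} (hd : 0 < d) {P : Set (Fin d → ℝ)} (hP : IsReflexive P)
    (x : Fin d → ℝ) (hx : ∀ G y, IsFacetNormal P G y → dotp y x ≤ 1) : x ∈ P := by
  have hdual : ∀ y ∈ dualPolytope P, dotp y x ≤ 1 := by
    intro y hy
    have hc := closure_convexHull_extremePoints (isCompact_lp hP.2.2) (convex_lp hP.2.2)
    rw [← hc] at hy
    have hcl : IsClosed {y : Fin d → ℝ | dotp x y ≤ 1} := isClosed_le (dotp_cont x) continuous_const
    have hsub : convexHull ℝ (Set.extremePoints ℝ (dualPolytope P)) ⊆ {y | dotp x y ≤ 1} := by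
      refine fun y hy => le_of_conv _ _ 1 ?_ y hy
      intro y hy
      rw [dotp_comm']
      exact hx _ _ (facet_of_extreme hd hP.1 hy)
    rw [dotp_comm']
    exact hcl.closure_subset_iff.2 hsub hy
  by_contra hxP
  obtain ⟨f, s, hf, hs⟩ := geometric_hahn_banach_closed_point (convex_lp hP.1)
    (isCompact_lp hP.1).isClosed hxP
  have hs0 : 0 < s := by simpa using hf 0 (interior_subset hP.2.1)
  have key : ∀ y, dotp (fun i => f (Pi.single i 1)) y = f y := by
    intro y
    conv_rhs => rw [← ContinuousLinearMap.coe_coe, LinearMap.pi_apply_eq_sum_univ f.toLinearMap y]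
    unfold dotp
    refine Finset.sum_congr rfl fun i _ => ?_
    rw [smul_eq_mul, mul_comm]
    congr 1
    show f _ = f _
    congr 1
    funext j
    simp [Pi.single_apply, eq_comm]
  have h1 := hdual (s⁻¹ • fun i => f (Pi.single i 1)) (by
    intro y hy
    rw [dotp_smul_left, key, inv_mul_le_iff₀ hs0, mul_one]
    exact (hf y hy).le)
  rw [dotp_smul_left, key, inv_mul_le_iff₀ hs0, mul_one] at h1
  linarith

section main

variable {d : ℕ} {P F : Set (Fin d → ℝ)} {u : Fin d → ℝ} {uv : (Fin d → ℝ) → (Fin d → ℝ)}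

theorem facet_dim_pos (hF : IsFacetNormal P F u) : 0 < d := by
  obtain ⟨⟨p, hp⟩, -, h, -⟩ := hF
  rw [h] at hp
  rcases Nat.eq_zero_or_pos d with rfl | h
  · have := hp.2
    simp [dotp] at this
  · exact h

theorem facet_ext_finite (hs : IsSimplicial P) (hF : IsFacetNormal P F u) :
    (Set.extremePoints ℝ F).Finite := by
  apply Set.finite_of_ncard_pos
  rw [hs F ⟨u, hF⟩]
  exact facet_dim_pos hF

theorem facet_ext_span (hP : IsReflexive P) (hs : IsSimplicial P) (hF : IsFacetNormal P F u) :
    Submodule.span ℝ (Set.extremePoints ℝ F) = ⊤ := by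
  rw [eq_top_iff, ← hF.span_top, Submodule.span_le]
  exact (hF.sub_conv hP (facet_ext_finite hs hF)).trans 
    (convexHull_min Submodule.subset_span (Submodule.convex _))

theorem facet_ext_one (hF : IsFacetNormal P F u) {x : Fin d → ℝ} (hx : x ∈ F) : dotp u x = 1 := by
  rw [hF.2.2.1] at hx
  exact hx.2

/-- normal of a neighbouring facet -/
theorem nbr_normal (hP : IsReflexive P) (hs : IsSimplicial P) (hF : IsFacetNormal P F u)
    (huv : ∀ w ∈ Set.extremePoints ℝ F, dotp (uv w) w = 1 ∧
      ∀ w' ∈ Set.extremePoints ℝ F, w' ≠ w → dotp (uv w) w' = 0)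
    {w : Fin d → ℝ} (hw : w ∈ Set.extremePoints ℝ F) {F' : Set (Fin d → ℝ)}
    (hN : NbrFacet P F w F') :
    ∃ (u' : Fin d → ℝ) (c : ℝ), IsFacetNormal P F' u' ∧ c < 0 ∧ u' = u + c • uv w := by
  obtain ⟨⟨u', hF'⟩, hne, hsub⟩ := hN
  have heq : u' = u + (dotp u' w - 1) • uv w := by
    apply eq_of_span _ (facet_ext_span hP hs hF)
    intro s hsF
    rw [dotp_add_left, dotp_smul_left, facet_ext_one hF hsF.1]
    by_cases h : s = w
    · subst h; rw [(huv s hw).1]; ring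
    · rw [(huv w hw).2 s hsF h, facet_ext_one hF' (hsub ⟨hsF, h⟩)]; ring
  refine ⟨u', _, hF', ?_, heq⟩
  have hle := hF'.2.1 w (hF.ext_sub hw).1
  refine lt_of_le_of_ne (by linarith) fun h => hne ?_
  rw [h] at heq
  have : u' = u := by simpa using heq
  rw [hF'.2.2.1, hF.2.2.1, this]

theorem nbr_neg (hP : IsReflexive P) (hs : IsSimplicial P) (hF : IsFacetNormal P F u)
    (huv : ∀ w ∈ Set.extremePoints ℝ F, dotp (uv w) w = 1 ∧
      ∀ w' ∈ Set.extremePoints ℝ F, w' ≠ w → dotp (uv w) w' = 0)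
    {w : Fin d → ℝ} (hw : w ∈ Set.extremePoints ℝ F) {F' : Set (Fin d → ℝ)}
    (hN : NbrFacet P F w F') {v : Fin d → ℝ} (hv0 : dotp u v = 0) (hv : v ∈ F') :
    dotp (uv w) v < 0 := by
  obtain ⟨u', c, hF', hc, rfl⟩ := nbr_normal hP hs hF huv hw hN
  have h1 := facet_ext_one hF' hv
  rw [dotp_add_left, dotp_smul_left, hv0, zero_add] at h1
  by_contra h
  nlinarith

theorem nbr_mem (hP : IsReflexive P) (hs : IsSimplicial P) (hF : IsFacetNormal P F u)
    (huv : ∀ w ∈ Set.extremePoints ℝ F, dotp (uv w) w = 1 ∧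
      ∀ w' ∈ Set.extremePoints ℝ F, w' ≠ w → dotp (uv w) w' = 0)
    {w : Fin d → ℝ} (hw : w ∈ Set.extremePoints ℝ F) {F' : Set (Fin d → ℝ)}
    (hN : NbrFacet P F w F') {v : Fin d → ℝ} (hvP : v ∈ Set.extremePoints ℝ P)
    (hv0 : dotp u v = 0) (hv : dotp (uv w) v < 0) :
    v ∈ Set.extremePoints ℝ F' ∧ v ∉ F := by
  obtain ⟨u', c, hF', hc, hu'⟩ := nbr_normal hP hs hF huv hw hN
  obtain ⟨n, hn⟩ := dotp_int (hF'.lp hP) (lp_of_extreme hP.1 hvP)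
  have hle := hF'.2.1 v hvP.1
  have hpos : 0 < dotp u' v := by
    rw [hu', dotp_add_left, dotp_smul_left, hv0, zero_add]
    exact mul_pos_of_neg_of_neg hc hv
  have hn1 : n = 1 := by
    rw [hn] at hle hpos
    have h1 : n ≤ 1 := by exact_mod_cast hle
    have h2 : 0 < n := by exact_mod_cast hpos
    omega
  have hmem : v ∈ F' := by
    rw [hF'.2.2.1]
    exact ⟨hvP.1, by rw [hn, hn1]; simp⟩
  have hsub : F' ⊆ P := by rw [hF'.2.2.1]; exact fun x hx => hx.1
  refine ⟨inter_extremePoints_subset_extremePoints_of_subset hsub ⟨hmem, hvP⟩, fun h => ?_⟩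
  rw [facet_ext_one hF h] at hv0
  exact one_ne_zero hv0

theorem nbr_exists (hP : IsReflexive P) (hs : IsSimplicial P) (hF : IsFacetNormal P F u)
    (huv : ∀ w ∈ Set.extremePoints ℝ F, dotp (uv w) w = 1 ∧
      ∀ w' ∈ Set.extremePoints ℝ F, w' ≠ w → dotp (uv w) w' = 0)
    {w : Fin d → ℝ} (hw : w ∈ Set.extremePoints ℝ F)
    {v : Fin d → ℝ} (hvP : v ∈ Set.extremePoints ℝ P) (hv : dotp (uv w) v < 0) :
    ∃ F', NbrFacet P F w F' := by
  obtain ⟨V, -, hPV⟩ := hP.1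
  have hVP : ∀ x ∈ V, x ∈ P := fun x hx => by rw [hPV]; exact subset_convexHull ℝ _ hx
  have hvV : v ∈ V := by
    rw [hPV] at hvP
    exact extremePoints_convexHull_subset hvP
  have hlt : ∀ x ∈ P, dotp (uv w) x < 0 → dotp u x < 1 := by
    intro x hx hneg
    refine lt_of_le_of_ne (hF.2.1 x hx) fun h => ?_
    have hxF : x ∈ F := by rw [hF.2.2.1]; exact ⟨hx, h⟩
    have := le_of_conv (Set.extremePoints ℝ F) ((-1 : ℝ) • uv w) 0 (by
      intro y hy
      rw [dotp_smul_left]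
      by_cases hyw : y = w
      · subst hyw; rw [(huv y hw).1]; norm_num
      · rw [(huv w hw).2 y hy hyw]; norm_num) x
      (hF.sub_conv hP (facet_ext_finite hs hF) hxF)
    rw [dotp_smul_left] at this
    linarith
  classical
  obtain ⟨x0, hx0, hmin⟩ := Finset.exists_min_image (V.filter fun x => dotp (uv w) x < 0)
    (fun x => (1 - dotp u x) / (-dotp (uv w) x)) ⟨v, by simp [hvV, hv]⟩
  rw [Finset.mem_filter] at hx0
  obtain ⟨hx0V, hx0n⟩ := hx0
  set t := (1 - dotp u x0) / (-dotp (uv w) x0) with ht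
  have ht0 : 0 < t := div_pos (by linarith [hlt x0 (hVP _ hx0V) hx0n]) (by linarith)
  have ht1 : dotp u x0 + (-t) * dotp (uv w) x0 = 1 := by
    have hne := hx0n.ne
    rw [ht]; field_simp; ring
  have hu' : ∀ y ∈ P, dotp (u + (-t) • uv w) y ≤ 1 := by
    rw [hPV]
    apply le_of_conv
    intro x hx
    rw [dotp_add_left, dotp_smul_left]
    have h1 := hF.2.1 x (hVP x hx)
    rcases lt_or_ge (dotp (uv w) x) 0 with h | h
    · have h2 := hmin x (by simp only [Finset.mem_filter]; exact ⟨hx, h⟩)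
      rw [le_div_iff₀ (by linarith)] at h2
      linarith
    · nlinarith
  have hmemx0 : x0 ∈ {y ∈ P | dotp (u + (-t) • uv w) y = 1} :=
    ⟨hVP _ hx0V, by rw [dotp_add_left, dotp_smul_left, ht1]⟩
  have hmemF : ∀ x ∈ Set.extremePoints ℝ F, x ≠ w →
      x ∈ {y ∈ P | dotp (u + (-t) • uv w) y = 1} := by
    intro x hx hxw
    refine ⟨(hF.ext_sub hx).1, ?_⟩
    rw [dotp_add_left, dotp_smul_left, (huv w hw).2 x hx hxw, facet_ext_one hF hx.1]; ring
  have hspan : Submodule.span ℝ {y ∈ P | dotp (u + (-t) • uv w) y = 1} = ⊤ := by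
    by_contra hne
    obtain ⟨z, hz0, hz⟩ := exists_perp _ hne
    apply hz0
    have hzeq : z = dotp z w • uv w := by
      apply eq_of_span _ (facet_ext_span hP hs hF)
      intro s hsF
      rw [dotp_smul_left]
      by_cases h : s = w
      · subst h; rw [(huv s hw).1]; ring
      · rw [(huv w hw).2 s hsF h, hz s (hmemF s hsF h)]; ring
    have h0 := hz x0 hmemx0
    rw [hzeq, dotp_smul_left] at h0
    rcases mul_eq_zero.1 h0 with h | h
    · rw [hzeq, h, zero_smul]
    · exact absurd h hx0n.ne
  refine ⟨_, ⟨_, facetNormal_of_span P _ ⟨x0, hmemx0⟩ hu' hspan⟩, ?_, ?_⟩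
  · intro heq
    have : w ∈ {y ∈ P | dotp (u + (-t) • uv w) y = 1} := by rw [heq]; exact hw.1
    have h1 := this.2
    rw [dotp_add_left, dotp_smul_left, (huv w hw).1, facet_ext_one hF hw.1] at h1
    linarith
  · rintro x ⟨hx, hxw⟩
    exact hmemF x hx hxw

/-- expansion of a vector in the dual basis -/
theorem dual_expand (hP : IsReflexive P) (hs : IsSimplicial P) (hF : IsFacetNormal P F u)
    (huv : ∀ w ∈ Set.extremePoints ℝ F, dotp (uv w) w = 1 ∧
      ∀ w' ∈ Set.extremePoints ℝ F, w' ≠ w → dotp (uv w) w' = 0)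
    (S : Finset (Fin d → ℝ)) (hS : (S : Set (Fin d → ℝ)) = Set.extremePoints ℝ F)
    (y x : Fin d → ℝ) : dotp y x = ∑ w ∈ S, dotp y w * dotp (uv w) x := by
  have hmem : ∀ w, w ∈ S ↔ w ∈ Set.extremePoints ℝ F := fun w => by rw [← hS]; simp
  have : y = ∑ w ∈ S, dotp y w • uv w := by
    apply eq_of_span _ (facet_ext_span hP hs hF)
    intro s hsF
    rw [dotp_sum_left, Finset.sum_eq_single s]
    · rw [dotp_smul_left, (huv s hsF).1, mul_one]
    · intro b hb hbs
      rw [dotp_smul_left, (huv b ((hmem b).1 hb)).2 s hsF hbs.symm, mul_zero]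
    · intro h; exact absurd ((hmem s).2 hsF) h
  conv_lhs => rw [this]
  rw [dotp_sum_left]
  exact Finset.sum_congr rfl fun w _ => dotp_smul_left _ _ _

end main

/-- for a vertex `v` of `P` with `⟨u_F, v⟩ = 0`:
(1) for `w ∈ 𝒱(F)`, `v = n(F,w)` iff `⟨u_F^w, v⟩ < 0`; in particular for each `w ∈ 𝒱(F)`
there is at most one vertex in `H_P(F,0)` pairing negatively with `u_F^w`;
(2) if `v` lies on precisely one neighboring facet `N(F,w)`, then `v ≁ w` and `v + w` is a
lattice point of `F`. -/
theorem stmt11 {d : ℕ} (P : Set (Fin d → ℝ)) (hP : IsReflexive P) (hs : IsSimplicial P)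
    (F : Set (Fin d → ℝ)) (u : Fin d → ℝ) (hF : IsFacetNormal P F u)
    (uv : (Fin d → ℝ) → (Fin d → ℝ))
    (huv : ∀ w ∈ Set.extremePoints ℝ F, dotp (uv w) w = 1 ∧
      ∀ w' ∈ Set.extremePoints ℝ F, w' ≠ w → dotp (uv w) w' = 0)
    (v : Fin d → ℝ) (hvP : v ∈ Set.extremePoints ℝ P) (hv0 : dotp u v = 0) :
    (∀ w ∈ Set.extremePoints ℝ F, (NbrVertex P F w v ↔ dotp (uv w) v < 0)) ∧
    (∀ w ∈ Set.extremePoints ℝ F, ∀ v₁ v₂ : Fin d → ℝ,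
      v₁ ∈ Set.extremePoints ℝ P → dotp u v₁ = 0 → dotp (uv w) v₁ < 0 →
      v₂ ∈ Set.extremePoints ℝ P → dotp u v₂ = 0 → dotp (uv w) v₂ < 0 → v₁ = v₂) ∧
    (∀ w ∈ Set.extremePoints ℝ F,
      (∃ F', NbrFacet P F w F' ∧ v ∈ F') →
      (∀ w₂ ∈ Set.extremePoints ℝ F, (∃ F₂, NbrFacet P F w₂ F₂ ∧ v ∈ F₂) → w₂ = w) →
      (¬ ∃ G, IsFacet P G ∧ v ∈ G ∧ w ∈ G) ∧ v + w ∈ F ∧ IsLP (v + w)) := by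
  have hiff : ∀ w ∈ Set.extremePoints ℝ F, (NbrVertex P F w v ↔ dotp (uv w) v < 0) := by
    intro w hw
    constructor
    · rintro ⟨F', hN, hvF', -⟩
      exact nbr_neg hP hs hF huv hw hN hv0 hvF'.1
    · intro hneg
      obtain ⟨F', hN⟩ := nbr_exists hP hs hF huv hw hvP hneg
      exact ⟨F', hN, nbr_mem hP hs hF huv hw hN hvP hv0 hneg⟩
  refine ⟨hiff, ?_, ?_⟩
  · intro w hw v₁ v₂ h1P h10 h1n h2P h20 h2n
    obtain ⟨F', hN⟩ := nbr_exists hP hs hF huv hw h1P h1n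
    obtain ⟨h1, h1F⟩ := nbr_mem hP hs hF huv hw hN h1P h10 h1n
    obtain ⟨h2, h2F⟩ := nbr_mem hP hs hF huv hw hN h2P h20 h2n
    by_contra hne
    obtain ⟨u', hF'⟩ := hN.1
    have hsub : F' ⊆ P := by rw [hF'.2.2.1]; exact fun x hx => hx.1
    have hfin := facet_ext_finite hs hF
    have hsubset : insert v₁ (insert v₂ (Set.extremePoints ℝ F \ {w})) ⊆
        Set.extremePoints ℝ F' := by
      rintro x (rfl | rfl | hx)
      · exact h1
      · exact h2
      · exact inter_extremePoints_subset_extremePoints_of_subset hsub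
          ⟨hN.2.2 hx, hF.ext_sub hx.1⟩
    have hle := Set.ncard_le_ncard hsubset (facet_ext_finite hs hF')
    have hd1 : (Set.extremePoints ℝ F \ {w}).Finite := hfin.subset Set.sdiff_subset
    rw [Set.ncard_insert_of_notMem (by
        rintro (h | h)
        · exact hne h
        · exact h1F h.1.1) (hd1.insert _),
      Set.ncard_insert_of_notMem (fun h => h2F h.1.1) hd1, hs F' hN.1,
      Set.ncard_sdiff_singleton_of_mem hw, hs F ⟨u, hF⟩] at hle
    omega
  · rintro w hw ⟨F', hN, hvF'⟩ huniq
    have hnn : ∀ w₂ ∈ Set.extremePoints ℝ F, w₂ ≠ w → 0 ≤ dotp (uv w₂) v := by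
      intro w₂ hw₂ hne
      by_contra hneg
      obtain ⟨F₂, hN₂, hv₂, -⟩ := (hiff w₂ hw₂).2 (not_le.1 hneg)
      exact hne (huniq w₂ hw₂ ⟨F₂, hN₂, hv₂.1⟩)
    have hfin := facet_ext_finite hs hF
    have hS := hfin.coe_toFinset
    have hnot : ¬ ∃ G, IsFacet P G ∧ v ∈ G ∧ w ∈ G := by
      rintro ⟨G, ⟨y, hG⟩, hvG, hwG⟩
      have e1 := dual_expand hP hs hF huv hfin.toFinset hS y v
      have e2 := dual_expand hP hs hF huv hfin.toFinset hS u v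
      have : ∑ w' ∈ hfin.toFinset, dotp y w' * dotp (uv w') v ≤
          ∑ w' ∈ hfin.toFinset, dotp u w' * dotp (uv w') v := by
        refine Finset.sum_le_sum fun w' hw' => ?_
        have hw' : w' ∈ Set.extremePoints ℝ F := by simpa using hw'
        rw [facet_ext_one hF hw'.1]
        by_cases h : w' = w
        · rw [h, facet_ext_one hG hwG]
        · exact mul_le_mul_of_nonneg_right (hG.2.1 w' (hF.ext_sub hw').1) (hnn w' hw' h)
      rw [← e1, ← e2, hv0, facet_ext_one hG hvG] at this
      linarith
    have hvl := lp_of_extreme hP.1 hvP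
    have hwP := hF.ext_sub hw
    have hwl := lp_of_extreme hP.1 hwP
    refine ⟨hnot, ?_, ?_⟩
    · rw [hF.2.2.1]
      refine ⟨mem_of_facets (facet_dim_pos hF) hP _ ?_, ?_⟩
      · intro G y hG
        rw [dotp_add_right]
        obtain ⟨a, ha⟩ := dotp_int (hG.lp hP) hvl
        obtain ⟨b, hb⟩ := dotp_int (hG.lp hP) hwl
        have h1 := hG.2.1 v hvP.1
        have h2 := hG.2.1 w hwP.1
        have h3 : ¬ (a = 1 ∧ b = 1) := by
          rintro ⟨rfl, rfl⟩
          refine hnot ⟨G, ⟨y, hG⟩, ?_, ?_⟩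
          · rw [hG.2.2.1]; exact ⟨hvP.1, by simpa using ha⟩
          · rw [hG.2.2.1]; exact ⟨hwP.1, by simpa using hb⟩
        rw [ha] at h1 ⊢
        rw [hb] at h2 ⊢
        have h1' : a ≤ 1 := by exact_mod_cast h1
        have h2' : b ≤ 1 := by exact_mod_cast h2
        have : a + b ≤ 1 := by omega
        exact_mod_cast this
      · rw [dotp_add_right, hv0, facet_ext_one hF hw.1, zero_add]
    · intro i
      obtain ⟨a, ha⟩ := hvl i
      obtain ⟨b, hb⟩ := hwl i
      exact ⟨a + b, by simp [ha, hb]⟩
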